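/- If f ∈ C⁶[−1,1] with f⁽⁶⁾ ≥ 0 on [−1,1], then 0 ≤ ∫₋₁¹ f(t) dt − [(5/9)f(−√15/5) + (8/9)f(0) + (5/9)f(√15/5)] ≤ [(1/6)f(−1) + (5/6)f(−√5/5) + (5/6)f(√5/5) + (1/6)f(1)] − ∫₋₁¹ f(t) dt. That is, the remainder of the 3-point Gauss quadrature is nonnegative and not greater than the remainder of the 4-point Lobatto quadrature for 5-convex functions. -/

import Mathlib

/-!
Both rules are exact on polynomials of degree at most five, so by Taylor's formula and Fubini the
remainder of each (integral minus sum) is `(1 / 5!) ∫ K(t) f⁽⁶⁾(t) dt`, where the Peano kernel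
`K(t)` is the remainder of the truncated power `x ↦ (x - t)₊⁵`. It then suffices that
`0 ≤ K_G` and `K_G + K_L ≤ 0` for the Gauss and Lobatto kernels. The kernels are even, because the
rules are symmetric, and on `[0, 1]` both inequalities come down to the weighted AM-GM inequality:
for `K_G` directly, and for `K_G + K_L` after replacing `(x - t)₊⁵` by its lower bound
`(x - t)⁵` at the irrational nodes, which leaves a polynomial with no terms in `t` and `t³`.
-/

open MeasureTheory Set
open scoped Nat Polynomial

theorem mul_pow_le_weighted_mean_pow {𝕜 : Type*} [Field 𝕜] [LinearOrder 𝕜] [IsStrictOrderedRing 𝕜]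
    {u v : 𝕜} (hu : 0 ≤ u) (hv : 0 ≤ v) (n : ℕ) :
    u * v ^ n ≤ ((u + n * v) / (n + 1)) ^ (n + 1) := by
  have : (0 : 𝕜) < n + 1 := by positivity
  have hshift : v + (u - v) / (n + 1) = (u + n * v) / (n + 1) := by field_simp; ring
  have hpos : 0 ≤ 2 * v + (u - v) / (n + 1) := by
    rw [two_mul, add_assoc, hshift]; positivity
  calc u * v ^ n = v ^ (n + 1) + ↑(n + 1) * v ^ n * ((u - v) / (n + 1)) := by
        push_cast; field_simp; ring
    _ ≤ (v + (u - v) / (n + 1)) ^ (n + 1) := pow_add_mul_le_add_pow hv hpos (n + 1)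
    _ = ((u + n * v) / (n + 1)) ^ (n + 1) := by rw [hshift]

theorem posPart_pow_add_neg_one_pow_mul_posPart_neg_pow {n : ℕ} (hn : n ≠ 0) (y : ℝ) :
    y⁺ ^ n + (-1) ^ n * (-y)⁺ ^ n = y ^ n := by
  rcases le_total 0 y with hy | hy
  · rw [posPart_of_nonneg hy, posPart_of_nonpos (neg_nonpos.mpr hy), zero_pow hn]; ring
  · rw [posPart_of_nonpos hy, posPart_of_nonneg (neg_nonneg.mpr hy), zero_pow hn, ← mul_pow]
    ring

theorem integral_posPart_sub_pow_mul {a b x : ℝ} (hx : x ∈ Icc a b) {n : ℕ} (hn : n ≠ 0)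
    {g : ℝ → ℝ} (hg : ContinuousOn g (Icc a b)) :
    ∫ t in a..b, (x - t)⁺ ^ n * g t = ∫ t in a..x, (x - t) ^ n * g t := by
  have hint {u v : ℝ} (hu : u ∈ Icc a b) (hv : v ∈ Icc a b) :
      IntervalIntegrable (fun t => (x - t)⁺ ^ n * g t) volume u v := by
    have hcont : Continuous fun t : ℝ => (x - t)⁺ ^ n := by fun_prop
    exact (hcont.continuousOn.mul (hg.mono (uIcc_subset_Icc hu hv))).intervalIntegrable
  have hab : a ≤ b := hx.1.trans hx.2
  rw [← intervalIntegral.integral_add_adjacent_intervals (hint ⟨le_rfl, hab⟩ hx)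
    (hint hx ⟨hab, le_rfl⟩)]
  have hleft : EqOn (fun t => (x - t)⁺ ^ n * g t) (fun t => (x - t) ^ n * g t) (uIcc a x) := by
    intro t ht
    rw [uIcc_of_le hx.1] at ht
    simp only [posPart_of_nonneg (sub_nonneg.mpr ht.2)]
  have hright : EqOn (fun t => (x - t)⁺ ^ n * g t) (fun _ => 0) (uIcc x b) := by
    intro t ht
    rw [uIcc_of_le hx.2] at ht
    simp only [posPart_of_nonpos (sub_nonpos.mpr ht.1), zero_pow hn, zero_mul]
  rw [intervalIntegral.integral_congr hleft, intervalIntegral.integral_congr hright,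
    intervalIntegral.integral_zero, add_zero]

theorem integral_posPart_sub_pow {a b t : ℝ} (ht : t ∈ Icc a b) {n : ℕ} (hn : n ≠ 0) :
    ∫ x in a..b, (x - t)⁺ ^ n = (b - t) ^ (n + 1) / (n + 1) :=
  calc ∫ x in a..b, (x - t)⁺ ^ n = ∫ x in -b..-a, (-t - x)⁺ ^ n := by
        simpa [neg_add_eq_sub, neg_sub_comm] using
          (intervalIntegral.integral_comp_neg (a := -b) (b := -a) fun x => (x - t)⁺ ^ n).symm
    _ = ∫ x in -b..-t, (-t - x) ^ n := by
        simpa using integral_posPart_sub_pow_mul ⟨neg_le_neg ht.2, neg_le_neg ht.1⟩ hn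
          (g := fun _ => 1) continuousOn_const
    _ = (b - t) ^ (n + 1) / (n + 1) := by
        rw [intervalIntegral.integral_comp_sub_left fun y => y ^ n, integral_pow]
        simp [neg_add_eq_sub]

/- Unlike in `taylor_integral_remainder`, the set in which the derivatives are taken does not vary
with `x`, so that a quadrature rule can be applied to both sides. -/
theorem eq_taylorWithinEval_add_integral {a b x : ℝ} {n : ℕ} {f : ℝ → ℝ}
    (hab : a < b) (hf : ContDiffOn ℝ (n + 1) f (Icc a b)) (hx : x ∈ Icc a b) :
    f x = taylorWithinEval f n (Icc a b) a x +
      (n ! : ℝ)⁻¹ * ∫ t in a..x, (x - t) ^ n * iteratedDerivWithin (n + 1) f (Icc a b) t := by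
  have hs := uniqueDiffOn_Icc hab
  have hsub : Icc a x ⊆ Icc a b := Icc_subset_Icc_right hx.2
  have hderiv : ContinuousOn (iteratedDerivWithin (n + 1) f (Icc a b)) (Icc a x) :=
    (hf.continuousOn_iteratedDerivWithin le_rfl hs).mono hsub
  have hint : IntervalIntegrable
      (fun t => (((n ! : ℝ)⁻¹ * (x - t) ^ n) • iteratedDerivWithin (n + 1) f (Icc a b) t))
      volume a x := ContinuousOn.intervalIntegrable_of_Icc hx.1 (by fun_prop)
  have hftc := intervalIntegral.integral_eq_sub_of_hasDerivAt_of_le hx.1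
    ((continuousOn_taylorWithinEval hs (hf.of_le (by norm_cast; lia))).mono hsub)
    (fun t ht => taylorWithinEval_hasDerivAt_Ioo x hab ⟨ht.1, ht.2.trans_le hx.2⟩
      (hf.of_le (by norm_cast; lia))
      ((hf.differentiableOn_iteratedDerivWithin (by norm_cast; lia) hs).mono Ioo_subset_Icc_self))
    hint
  rw [taylorWithinEval_self] at hftc
  rw [← intervalIntegral.integral_const_mul, eq_comm, ← eq_sub_iff_add_eq', ← hftc]
  simp only [smul_eq_mul, mul_assoc]

/-- A quadrature rule on `[a, b]` whose nodes and weights are indexed by `ι`. -/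
structure QuadratureRule (ι : Type*) (a b : ℝ) where
  node : ι → ℝ
  weight : ι → ℝ
  node_mem : ∀ i, node i ∈ Icc a b

namespace QuadratureRule

variable {ι : Type*} [Fintype ι] {a b : ℝ} (Q : QuadratureRule ι a b)

/-- The value of the quadrature rule on `f`, an approximation of `∫ x in a..b, f x`. -/
noncomputable def sum (f : ℝ → ℝ) : ℝ :=
  ∑ i, Q.weight i * f (Q.node i)

/-- The remainder of the quadrature rule, with the sign convention integral minus sum. -/
noncomputable def remainder (f : ℝ → ℝ) : ℝ :=
  (∫ x in a..b, f x) - Q.sum f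

/-- The rule integrates every polynomial of degree at most `n` exactly. -/
def IsExact (n : ℕ) : Prop :=
  ∀ p : ℝ[X], p.natDegree ≤ n → Q.remainder (fun x => p.eval x) = 0

/-- The Peano kernel of order `n`: the remainder of the truncated power `x ↦ (x - t)₊ⁿ`.
It is not divided by `n!`. -/
noncomputable def peanoKernel (n : ℕ) (t : ℝ) : ℝ :=
  Q.remainder fun x => (x - t)⁺ ^ n

variable {Q}

theorem remainder_congr (hab : a ≤ b) {f g : ℝ → ℝ} (h : EqOn f g (Icc a b)) :
    Q.remainder f = Q.remainder g := by
  have hint : ∫ x in a..b, f x = ∫ x in a..b, g x :=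
    intervalIntegral.integral_congr (by rwa [uIcc_of_le hab])
  simp only [remainder, sum, hint, fun i => h (Q.node_mem i)]

theorem remainder_add {f g : ℝ → ℝ} (hf : IntervalIntegrable f volume a b)
    (hg : IntervalIntegrable g volume a b) :
    Q.remainder (fun x => f x + g x) = Q.remainder f + Q.remainder g := by
  simp only [remainder, sum, intervalIntegral.integral_add hf hg, mul_add, Finset.sum_add_distrib]
  ring

theorem remainder_const_mul (c : ℝ) (f : ℝ → ℝ) :
    Q.remainder (fun x => c * f x) = c * Q.remainder f := by
  simp only [remainder, sum, intervalIntegral.integral_const_mul, mul_sub, Finset.mul_sum,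
    mul_left_comm c]

theorem remainder_finsetSum {κ : Type*} (s : Finset κ) {f : κ → ℝ → ℝ}
    (hf : ∀ k ∈ s, IntervalIntegrable (f k) volume a b) :
    Q.remainder (fun x => ∑ k ∈ s, f k x) = ∑ k ∈ s, Q.remainder (f k) := by
  simp only [remainder, sum, intervalIntegral.integral_finsetSum hf, Finset.sum_sub_distrib,
    Finset.mul_sum]
  rw [Finset.sum_comm]

theorem isExact_of_remainder_pow_eq_zero {n : ℕ} (h : ∀ k ≤ n, Q.remainder (fun x => x ^ k) = 0) :
    Q.IsExact n := by
  intro p hp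
  simp only [Polynomial.eval_eq_sum_range' (Nat.lt_succ_of_le hp)]
  rw [remainder_finsetSum _ fun k _ => Continuous.intervalIntegrable (by fun_prop) _ _]
  refine Finset.sum_eq_zero fun k hk => ?_
  rw [remainder_const_mul, h k (Finset.mem_range_succ_iff.mp hk), mul_zero]

theorem remainder_intervalIntegral {c d : ℝ} {F : ℝ → ℝ → ℝ}
    (hab : a ≤ b) (hF : ContinuousOn F.uncurry (Icc a b ×ˢ uIcc c d)) :
    Q.remainder (fun x => ∫ t in c..d, F x t) = ∫ t in c..d, Q.remainder fun x => F x t := by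
  have hnode (i : ι) : IntervalIntegrable (fun t => Q.weight i * F (Q.node i) t) volume c d :=
    (ContinuousOn.intervalIntegrable (hF.comp (f := fun t => (Q.node i, t)) (by fun_prop)
      fun t ht => ⟨Q.node_mem i, ht⟩)).const_mul _
  have hnodes : IntervalIntegrable (fun t => Q.sum fun x => F x t) volume c d := by
    simpa only [sum, Finset.sum_fn] using IntervalIntegrable.sum Finset.univ fun i _ => hnode i
  have hprod : IntegrableOn F.uncurry (uIoc a b ×ˢ uIoc c d) :=
    (hF.integrableOn_compact (isCompact_Icc.prod isCompact_uIcc)).mono_set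
      (prod_mono (by rw [uIoc_of_le hab]; exact Ioc_subset_Icc_self) uIoc_subset_uIcc)
  have hinner : IntervalIntegrable (fun t => ∫ x in a..b, F x t) volume c d := by
    rw [IntegrableOn, Measure.volume_eq_prod, ← Measure.prod_restrict, uIoc_of_le hab] at hprod
    simp only [intervalIntegrable_iff, intervalIntegral.integral_of_le hab]
    exact Integrable.integral_prod_right hprod
  have hsum : Q.sum (fun x => ∫ t in c..d, F x t) = ∫ t in c..d, Q.sum fun x => F x t := by
    simp only [sum]
    rw [intervalIntegral.integral_finsetSum fun i _ => hnode i]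
    simp only [intervalIntegral.integral_const_mul]
  simp only [remainder]
  rw [intervalIntegral.integral_sub hinner hnodes, intervalIntegral_intervalIntegral_swap hprod,
    hsum]

theorem continuous_peanoKernel (n : ℕ) : Continuous (Q.peanoKernel n) := by
  unfold peanoKernel remainder sum
  have : Continuous fun t => ∫ x in a..b, (x - t)⁺ ^ n :=
    intervalIntegral.continuous_parametric_intervalIntegral_of_continuous' (by fun_prop) a b
  fun_prop

theorem IsExact.remainder_sub_pow {n k : ℕ} (hQ : Q.IsExact n) (hk : k ≤ n) (c : ℝ) :
    Q.remainder (fun x => (x - c) ^ k) = 0 := by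
  have hdeg : ((Polynomial.X - Polynomial.C c) ^ k).natDegree ≤ n := by
    rwa [Polynomial.natDegree_pow, Polynomial.natDegree_X_sub_C, mul_one]
  simpa only [Polynomial.eval_pow, Polynomial.eval_sub, Polynomial.eval_X, Polynomial.eval_C]
    using hQ _ hdeg

theorem IsExact.remainder_taylorWithinEval {n : ℕ} (hQ : Q.IsExact n) (f : ℝ → ℝ) (s : Set ℝ)
    (c : ℝ) : Q.remainder (taylorWithinEval f n s c) = 0 := by
  simp only [funext (taylor_within_apply f n s c), smul_eq_mul,
    mul_right_comm _ _ (iteratedDerivWithin _ _ _ _)]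
  rw [remainder_finsetSum _ fun k _ => Continuous.intervalIntegrable (by fun_prop) _ _]
  refine Finset.sum_eq_zero fun k hk => ?_
  rw [remainder_const_mul, hQ.remainder_sub_pow (Finset.mem_range_succ_iff.mp hk), mul_zero]

theorem IsExact.factorial_mul_remainder {n : ℕ} (hQ : Q.IsExact n) (hn : n ≠ 0) (hab : a < b)
    {f : ℝ → ℝ} (hf : ContDiffOn ℝ (n + 1) f (Icc a b)) :
    n ! * Q.remainder f =
      ∫ t in a..b, Q.peanoKernel n t * iteratedDerivWithin (n + 1) f (Icc a b) t := by
  set g := iteratedDerivWithin (n + 1) f (Icc a b)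
  have hg : ContinuousOn g (Icc a b) :=
    hf.continuousOn_iteratedDerivWithin le_rfl (uniqueDiffOn_Icc hab)
  have hTaylor : EqOn (fun x => ∫ t in a..b, (x - t)⁺ ^ n * g t)
      (fun x => n ! * f x + -n ! * taylorWithinEval f n (Icc a b) a x) (Icc a b) := fun x hx => by
    have hn' : (n ! : ℝ) ≠ 0 := by positivity
    dsimp only
    rw [integral_posPart_sub_pow_mul hx hn hg, eq_taylorWithinEval_add_integral hab hf hx]
    field_simp
    ring
  have hpoly : Continuous (taylorWithinEval f n (Icc a b) a) := by
    simp only [funext (taylor_within_apply f n (Icc a b) a)]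
    fun_prop
  have hF : ContinuousOn (Function.uncurry fun x t => (x - t)⁺ ^ n * g t)
      (Icc a b ×ˢ uIcc a b) := by
    rw [uIcc_of_le hab.le]
    exact ContinuousOn.mul (Continuous.continuousOn (by fun_prop))
      (hg.comp continuousOn_snd fun p hp => hp.2)
  have hmul (t : ℝ) : Q.remainder (fun x => (x - t)⁺ ^ n * g t) = Q.peanoKernel n t * g t := by
    simp only [mul_comm _ (g t), remainder_const_mul, peanoKernel]
  calc n ! * Q.remainder f
      = Q.remainder fun x => n ! * f x + -n ! * taylorWithinEval f n (Icc a b) a x := by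
        rw [remainder_add
            ((hf.continuousOn.intervalIntegrable_of_Icc hab.le).const_mul _)
            ((hpoly.intervalIntegrable a b).const_mul _),
          remainder_const_mul, remainder_const_mul, hQ.remainder_taylorWithinEval, mul_zero,
          add_zero]
    _ = Q.remainder fun x => ∫ t in a..b, (x - t)⁺ ^ n * g t :=
        (remainder_congr hab.le hTaylor).symm
    _ = ∫ t in a..b, Q.peanoKernel n t * g t := by
        rw [remainder_intervalIntegral hab.le hF]
        simp only [hmul]

theorem peanoKernel_eq {n : ℕ} (hn : n ≠ 0) {t : ℝ} (ht : t ∈ Icc a b) :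
    Q.peanoKernel n t =
      (b - t) ^ (n + 1) / (n + 1) - Q.sum fun x => (x - t)⁺ ^ n := by
  rw [peanoKernel, remainder, integral_posPart_sub_pow ht hn]

theorem IsExact.remainder_nonneg {n : ℕ} (hQ : Q.IsExact n) (hn : n ≠ 0) (hab : a < b)
    {f : ℝ → ℝ} (hf : ContDiffOn ℝ (n + 1) f (Icc a b))
    (hf' : ∀ t ∈ Icc a b, 0 ≤ iteratedDerivWithin (n + 1) f (Icc a b) t)
    (hK : ∀ t ∈ Icc a b, 0 ≤ Q.peanoKernel n t) :
    0 ≤ Q.remainder f := by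
  refine nonneg_of_mul_nonneg_right ?_ (Nat.cast_pos.mpr n.factorial_pos)
  rw [hQ.factorial_mul_remainder hn hab hf]
  exact intervalIntegral.integral_nonneg hab.le fun t ht => mul_nonneg (hK t ht) (hf' t ht)

theorem IsExact.remainder_le_neg_remainder {κ : Type*} [Fintype κ] {Q' : QuadratureRule κ a b}
    {n : ℕ} (hQ : Q.IsExact n) (hQ' : Q'.IsExact n) (hn : n ≠ 0) (hab : a < b)
    {f : ℝ → ℝ} (hf : ContDiffOn ℝ (n + 1) f (Icc a b))
    (hf' : ∀ t ∈ Icc a b, 0 ≤ iteratedDerivWithin (n + 1) f (Icc a b) t)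
    (hK : ∀ t ∈ Icc a b, Q.peanoKernel n t ≤ -Q'.peanoKernel n t) :
    Q.remainder f ≤ -Q'.remainder f := by
  have hderiv := hf.continuousOn_iteratedDerivWithin le_rfl (uniqueDiffOn_Icc hab)
  have hint {K : ℝ → ℝ} (hK : Continuous K) : IntervalIntegrable
      (fun t => K t * iteratedDerivWithin (n + 1) f (Icc a b) t) volume a b :=
    (hK.continuousOn.mul hderiv).intervalIntegrable_of_Icc hab.le
  refine le_of_mul_le_mul_left ?_ (Nat.cast_pos.mpr n.factorial_pos)
  rw [mul_neg, hQ.factorial_mul_remainder hn hab hf, hQ'.factorial_mul_remainder hn hab hf,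
    ← intervalIntegral.integral_neg]
  refine intervalIntegral.integral_mono_on hab.le (hint (continuous_peanoKernel n))
    (hint (continuous_peanoKernel n)).neg fun t ht => ?_
  rw [← neg_mul]
  exact mul_le_mul_of_nonneg_right (hK t ht) (hf' t ht)

section Reflection

/-- A rule on `[-b, b]` is symmetric if it is invariant under `x ↦ -x`. -/
def IsSymm (Q : QuadratureRule ι (-b) b) : Prop :=
  ∀ f : ℝ → ℝ, Q.sum (fun x => f (-x)) = Q.sum f

variable {Q : QuadratureRule ι (-b) b}

theorem IsSymm.remainder_comp_neg (hQ : Q.IsSymm) (f : ℝ → ℝ) :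
    Q.remainder (fun x => f (-x)) = Q.remainder f := by
  rw [remainder, hQ f, intervalIntegral.integral_comp_neg, neg_neg, remainder]

theorem IsSymm.peanoKernel_neg (hQ : Q.IsSymm) {n : ℕ} (hexact : Q.IsExact n) (hn : n ≠ 0)
    (t : ℝ) : Q.peanoKernel n (-t) = (-1) ^ (n + 1) * Q.peanoKernel n t := by
  have hreflect : Q.remainder (fun x => (-(x - t))⁺ ^ n) = Q.peanoKernel n (-t) := by
    rw [peanoKernel, ← hQ.remainder_comp_neg]
    simp only [neg_sub, sub_neg_eq_add, add_comm t]
  have hsplit : Q.peanoKernel n t + (-1) ^ n * Q.peanoKernel n (-t) = 0 := by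
    rw [← hreflect, ← remainder_const_mul, peanoKernel,
      ← remainder_add (Continuous.intervalIntegrable (by fun_prop) _ _)
        (Continuous.intervalIntegrable (by fun_prop) _ _)]
    simp only [posPart_pow_add_neg_one_pow_mul_posPart_neg_pow hn, hexact.remainder_sub_pow le_rfl]
  have hsign : (-1 : ℝ) ^ n * (-1) ^ n = 1 := by rw [← mul_pow]; norm_num
  linear_combination (-1) ^ n * hsplit - Q.peanoKernel n (-t) * hsign

theorem IsSymm.peanoKernel_abs (hQ : Q.IsSymm) {n : ℕ} (hexact : Q.IsExact n) (hn : Odd n)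
    (t : ℝ) : Q.peanoKernel n |t| = Q.peanoKernel n t := by
  rcases abs_choice t with h | h <;> rw [h]
  rw [hQ.peanoKernel_neg hexact hn.pos.ne', hn.add_one.neg_one_pow, one_mul]

end Reflection

end QuadratureRule

theorem sqrt_fifteen_div_five_sq : (√15 / 5) ^ 2 = 3 / 5 := by
  rw [div_pow, Real.sq_sqrt (by norm_num)]; norm_num

theorem sqrt_five_div_five_sq : (√5 / 5) ^ 2 = 1 / 5 := by
  rw [div_pow, Real.sq_sqrt (by norm_num)]; norm_num

theorem sqrt_fifteen_div_five_mem : √15 / 5 ∈ Icc (1549 / 2000 : ℝ) (31 / 40) := by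
  constructor <;> nlinarith [sqrt_fifteen_div_five_sq, Real.sqrt_nonneg 15]

theorem sqrt_five_div_five_mem : √5 / 5 ∈ Icc (447 / 1000 : ℝ) (1 / 2) := by
  constructor <;> nlinarith [sqrt_five_div_five_sq, Real.sqrt_nonneg 5]

/-- The three-point Gauss–Legendre rule on `[-1, 1]`. -/
noncomputable def gauss3 : QuadratureRule (Fin 3) (-1) 1 where
  node := ![-(√15 / 5), 0, √15 / 5]
  weight := ![5 / 9, 8 / 9, 5 / 9]
  node_mem i := by
    obtain ⟨hlower, hupper⟩ := sqrt_fifteen_div_five_mem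
    fin_cases i <;> constructor <;> dsimp <;> linarith

/-- The four-point Lobatto rule on `[-1, 1]`. -/
noncomputable def lobatto4 : QuadratureRule (Fin 4) (-1) 1 where
  node := ![-1, -(√5 / 5), √5 / 5, 1]
  weight := ![1 / 6, 5 / 6, 5 / 6, 1 / 6]
  node_mem i := by
    obtain ⟨hlower, hupper⟩ := sqrt_five_div_five_mem
    fin_cases i <;> constructor <;> dsimp <;> linarith

theorem gauss3_sum (f : ℝ → ℝ) :
    gauss3.sum f = 5 / 9 * f (-(√15 / 5)) + 8 / 9 * f 0 + 5 / 9 * f (√15 / 5) := by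
  simp [QuadratureRule.sum, gauss3, Fin.sum_univ_three]

theorem lobatto4_sum (f : ℝ → ℝ) :
    lobatto4.sum f =
      1 / 6 * f (-1) + 5 / 6 * f (-(√5 / 5)) + 5 / 6 * f (√5 / 5) + 1 / 6 * f 1 := by
  simp [QuadratureRule.sum, lobatto4, Fin.sum_univ_four]

theorem isSymm_gauss3 : gauss3.IsSymm := fun f => by
  simp only [gauss3_sum, neg_neg, neg_zero]
  ring

theorem isSymm_lobatto4 : lobatto4.IsSymm := fun f => by
  simp only [lobatto4_sum, neg_neg]
  ring

theorem isExact_gauss3 : gauss3.IsExact 5 := by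
  refine QuadratureRule.isExact_of_remainder_pow_eq_zero fun k hk => ?_
  rw [QuadratureRule.remainder, gauss3_sum, integral_pow]
  have hsq := sqrt_fifteen_div_five_sq
  generalize √15 / 5 = β at hsq ⊢
  interval_cases k <;> grind

theorem isExact_lobatto4 : lobatto4.IsExact 5 := by
  refine QuadratureRule.isExact_of_remainder_pow_eq_zero fun k hk => ?_
  rw [QuadratureRule.remainder, lobatto4_sum, integral_pow]
  have hsq := sqrt_five_div_five_sq
  generalize √5 / 5 = α at hsq ⊢
  interval_cases k <;> grind

theorem gauss3_peanoKernel {t : ℝ} (ht : t ∈ Icc 0 1) :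
    gauss3.peanoKernel 5 t = (1 - t) ^ 6 / 6 - 5 / 9 * (√15 / 5 - t)⁺ ^ 5 := by
  have hneg : (-(√15 / 5) - t)⁺ = 0 := posPart_of_nonpos (by linarith [ht.1, Real.sqrt_nonneg 15])
  have hzero : (0 - t)⁺ = 0 := posPart_of_nonpos (by linarith [ht.1])
  rw [QuadratureRule.peanoKernel_eq (by norm_num) ⟨by linarith [ht.1], ht.2⟩, gauss3_sum, hneg,
    hzero, zero_pow (by norm_num)]
  push_cast
  ring

theorem lobatto4_peanoKernel {t : ℝ} (ht : t ∈ Icc 0 1) :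
    lobatto4.peanoKernel 5 t =
      (1 - t) ^ 6 / 6 - 5 / 6 * (√5 / 5 - t)⁺ ^ 5 - 1 / 6 * (1 - t) ^ 5 := by
  have hneg : (-(√5 / 5) - t)⁺ = 0 := posPart_of_nonpos (by linarith [ht.1, Real.sqrt_nonneg 5])
  have hleft : (-1 - t)⁺ = 0 := posPart_of_nonpos (by linarith [ht.1])
  have hright : (1 - t)⁺ = 1 - t := posPart_of_nonneg (by linarith [ht.2])
  rw [QuadratureRule.peanoKernel_eq (by norm_num) ⟨by linarith [ht.1], ht.2⟩, lobatto4_sum, hneg,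
    hleft, hright, zero_pow (by norm_num), mul_zero, mul_zero]
  push_cast
  ring

theorem posPart_sub_pow_five_le {β t : ℝ} (hβ : β ≤ 31 / 40) :
    10 / 3 * (β - t)⁺ ^ 5 ≤ (1 - t) ^ 6 := by
  rcases le_total β t with h | h
  · rw [posPart_of_nonpos (sub_nonpos.mpr h), zero_pow (by norm_num), mul_zero]
    positivity
  · have hv : 0 ≤ β - t := sub_nonneg.mpr h
    have hmean := mul_pow_le_weighted_mean_pow (u := 5 * (1 - β)) (by linarith) hv 5
    calc 10 / 3 * (β - t)⁺ ^ 5 = 10 / 3 * (β - t) ^ 5 := by rw [posPart_of_nonneg hv]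
      _ ≤ (6 / 5) ^ 6 * (5 * (1 - β) * (β - t) ^ 5) := by
        rw [← mul_assoc]
        exact mul_le_mul_of_nonneg_right (by linarith) (by positivity)
      _ ≤ (6 / 5) ^ 6 * ((5 * (1 - β) + (5 : ℕ) * (β - t)) / ((5 : ℕ) + 1)) ^ (5 + 1) := by gcongr
      _ = (1 - t) ^ 6 := by push_cast; ring

theorem gauss3_peanoKernel_nonneg {t : ℝ} (ht : t ∈ Icc (-1) 1) : 0 ≤ gauss3.peanoKernel 5 t := by
  rw [← isSymm_gauss3.peanoKernel_abs isExact_gauss3 (by decide),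
    gauss3_peanoKernel ⟨abs_nonneg t, abs_le.mpr ht⟩]
  linarith [posPart_sub_pow_five_le (t := |t|) sqrt_fifteen_div_five_mem.2]

theorem two_mul_one_sub_pow_six_le {α β t : ℝ} (hα : 447 / 1000 ≤ α) (hα2 : α ^ 2 = 1 / 5)
    (hβ : 1549 / 2000 ≤ β) (hβ2 : β ^ 2 = 3 / 5) (ht0 : 0 ≤ t) (ht : t ≤ 1 / 2) :
    2 * (1 - t) ^ 6 ≤ (1 - t) ^ 5 + 5 * (α - t) ^ 5 + 10 / 3 * (β - t) ^ 5 := by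
  have hexpand : (1 - t) ^ 5 + 5 * (α - t) ^ 5 + 10 / 3 * (β - t) ^ 5 - 2 * (1 - t) ^ 6 =
      (6 * β + α - 5) / 5 + 10 * (2 * β + α - 2) * t ^ 2 + 25 / 3 * (2 * β + 3 * α - 3) * t ^ 4 +
        8 / 3 * t ^ 5 - 2 * t ^ 6 := by
    linear_combination
      (5 * (α - 5 * t) * (α ^ 2 + 1 / 5) + 50 * t ^ 2 * (α - t)) * hα2 +
        (10 / 3 * (β - 5 * t) * (β ^ 2 + 3 / 5) + 100 / 3 * t ^ 2 * (β - t)) * hβ2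
  -- Once `8 / 3 * t ^ 5 - 2 * t ^ 6` is bounded below by `5 / 3 * t ^ 5`, the terms of degree at
  -- least four amount to `-(5 / 12) * ((11 / 5 - 4 * t) * t ^ 4)`.
  have hmean : (11 / 5 - 4 * t) * t ^ 4 ≤ (11 / 25) ^ 5 :=
    (mul_pow_le_weighted_mean_pow (u := 11 / 5 - 4 * t) (by linarith) ht0 4).trans_eq
      (by push_cast; ring)
  have h₂ : -1 / 250 * t ^ 2 ≤ (2 * β + α - 2) * t ^ 2 := by gcongr; linarith
  have h₄ : -11 / 100 * t ^ 4 ≤ (2 * β + 3 * α - 3) * t ^ 4 := by gcongr; linarith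
  have hsq : t ^ 2 ≤ (1 / 2) ^ 2 := by gcongr
  have hsix : t ^ 6 ≤ 1 / 2 * t ^ 5 := by rw [pow_succ']; gcongr
  linarith

theorem two_mul_one_sub_pow_six_le_posPart {t : ℝ} (ht : t ∈ Icc 0 1) :
    2 * (1 - t) ^ 6 ≤
      (1 - t) ^ 5 + 5 * (√5 / 5 - t)⁺ ^ 5 + 10 / 3 * (√15 / 5 - t)⁺ ^ 5 := by
  rcases le_total t (1 / 2) with hhalf | hhalf
  · have hpow (y : ℝ) : y ^ 5 ≤ y⁺ ^ 5 := (Odd.pow_le_pow (by decide)).mpr (le_posPart y)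
    linarith [hpow (√5 / 5 - t), hpow (√15 / 5 - t), two_mul_one_sub_pow_six_le
      sqrt_five_div_five_mem.1 sqrt_five_div_five_sq sqrt_fifteen_div_five_mem.1
      sqrt_fifteen_div_five_sq ht.1 hhalf]
  · have h : 0 ≤ (1 - t) ^ 5 * (2 * t - 1) :=
      mul_nonneg (pow_nonneg (by linarith [ht.2]) 5) (by linarith)
    have h₁ : 0 ≤ (√5 / 5 - t)⁺ ^ 5 := by positivity
    have h₂ : 0 ≤ (√15 / 5 - t)⁺ ^ 5 := by positivity
    linarith

theorem gauss3_peanoKernel_le_neg_lobatto4_peanoKernel {t : ℝ} (ht : t ∈ Icc (-1) 1) :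
    gauss3.peanoKernel 5 t ≤ -lobatto4.peanoKernel 5 t := by
  have habs : |t| ∈ Icc 0 1 := ⟨abs_nonneg t, abs_le.mpr ht⟩
  rw [← isSymm_gauss3.peanoKernel_abs isExact_gauss3 (by decide),
    ← isSymm_lobatto4.peanoKernel_abs isExact_lobatto4 (by decide),
    gauss3_peanoKernel habs, lobatto4_peanoKernel habs]
  linarith [two_mul_one_sub_pow_six_le_posPart habs]

theorem gauss3_remainder_le_lobatto4_remainder (f : ℝ → ℝ)
    (hf : ContDiffOn ℝ 6 f (Set.Icc (-1:ℝ) 1))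
    (h6 : ∀ x ∈ Set.Icc (-1:ℝ) 1, 0 ≤ iteratedDerivWithin 6 f (Set.Icc (-1:ℝ) 1) x) :
    0 ≤ (∫ t in (-1:ℝ)..1, f t) -
        ((5 / 9) * f (-(Real.sqrt 15) / 5) + (8 / 9) * f 0 + (5 / 9) * f (Real.sqrt 15 / 5)) ∧
    (∫ t in (-1:ℝ)..1, f t) -
        ((5 / 9) * f (-(Real.sqrt 15) / 5) + (8 / 9) * f 0 + (5 / 9) * f (Real.sqrt 15 / 5)) ≤
      ((1 / 6) * f (-1) + (5 / 6) * f (-(Real.sqrt 5) / 5) + (5 / 6) * f (Real.sqrt 5 / 5) +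
        (1 / 6) * f 1) - ∫ t in (-1:ℝ)..1, f t := by
  have hf' : ContDiffOn ℝ ((5 : ℕ) + 1) f (Icc (-1) 1) := hf.of_le (by norm_num)
  have hgauss : 0 ≤ gauss3.remainder f :=
    isExact_gauss3.remainder_nonneg (by decide) (by norm_num) hf' h6
      fun t => gauss3_peanoKernel_nonneg
  have hlobatto : gauss3.remainder f ≤ -lobatto4.remainder f :=
    isExact_gauss3.remainder_le_neg_remainder isExact_lobatto4 (by decide) (by norm_num) hf' h6
      fun t => gauss3_peanoKernel_le_neg_lobatto4_peanoKernel
  simpa only [QuadratureRule.remainder, gauss3_sum, lobatto4_sum, neg_div, neg_sub]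
    using And.intro hgauss hlobatto
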